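/- Let k = ⌊c₁ p^α⌋, L = ⌊(2βk/λ)·log(p−k)⌋, n = ⌊c₂ k^γ/λ²⌋ and D = (log p)², for some β, γ, λ, c₁, c₂ > 0 and α ∈ (0, 1/2). If β < 1/2 − α and γ < 2, then as p → ∞ the squared low-degree norm satisfies ‖L_{L+n}^{≤D}‖² = O(1). -/

import Mathlib

open MeasureTheory ProbabilityTheory Filter
open scoped ENNReal NNReal

noncomputable section

/-- Product of independent one-dimensional Gaussians `N(m j, 1)`: the law of `N(m, I_p)`. -/
def gaussPi {p : ℕ} (m : Fin p → ℝ) : Measure (Fin p → ℝ) :=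
  Measure.pi fun j => gaussianReal (m j) 1

/-- The `k`-sparse mean vector with support `S` and nonzero entries `√(λ/k)`. -/
def muVec (p k : ℕ) (lam : ℝ) (S : Finset (Fin p)) : Fin p → ℝ :=
  fun j => if j ∈ S then Real.sqrt (lam / k) else 0

/-- The null distribution `Q_{L+n}`: all `L+n` samples are `N(0, I_p)`. -/
def nullLaw (p m : ℕ) : Measure (Fin m → Fin p → ℝ) :=
  Measure.pi fun _ : Fin m => gaussPi (fun _ : Fin p => 0)

/-- The alternative distribution `P_{L+n}`: `S` uniform over all `k`-element subsets of `[p]`;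
the first `L` samples are `μ^S + ξ_i` (labeled, label 1) and the remaining `n` samples are
`y_i μ^S + ξ_i` with unobserved Rademacher labels `y_i`. -/
def altLaw (p k L n : ℕ) (lam : ℝ) : Measure (Fin (L + n) → Fin p → ℝ) :=
  ((((Finset.univ : Finset (Fin p)).powersetCard k).card : ℝ≥0∞))⁻¹ •
    ∑ S ∈ (Finset.univ : Finset (Fin p)).powersetCard k,
      Measure.pi fun i : Fin (L + n) =>
        if (i : ℕ) < L then gaussPi (muVec p k lam S)
        else (2 : ℝ≥0∞)⁻¹ • gaussPi (muVec p k lam S)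
          + (2 : ℝ≥0∞)⁻¹ • gaussPi (fun j => -muVec p k lam S j)

def He : ℕ → Polynomial ℝ
  | 0 => 1
  | n + 1 => Polynomial.X * He n - Polynomial.derivative (He n)

lemma He_deriv (n : ℕ) : Polynomial.derivative (He (n + 1)) = (n + 1 : ℝ) • He n := by
  induction n with
  | zero => simp [He]
  | succ n ih =>
    rw [He, Polynomial.derivative_sub, Polynomial.derivative_mul, ih]
    rw [Polynomial.derivative_smul]
    have : He (n + 1) = Polynomial.X * He n - Polynomial.derivative (He n) := rfl
    simp only [Polynomial.derivative_X, one_mul, mul_smul_comm]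
    rw [add_sub_assoc, ← smul_sub, ← this]
    push_cast
    rw [add_smul (n + 1 : ℝ) 1, one_smul, add_comm]

lemma integrable_pow_gauss (m : ℝ) (n : ℕ) :
    Integrable (fun x : ℝ => x ^ n) (gaussianReal m 1) := by
  have h := (memLp_id_gaussianReal' (μ := m) (v := 1) (n : ℝ≥0∞) (by simp)).integrable_norm_pow'
  refine h.mono' (by fun_prop) (Eventually.of_forall fun x => ?_)
  simp

lemma integrable_poly_gauss (m : ℝ) (q : Polynomial ℝ) :
    Integrable (fun x : ℝ => q.eval x) (gaussianReal m 1) := by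
  simp only [Polynomial.eval_eq_sum_range]
  exact integrable_finsetSum _ fun i _ => (integrable_pow_gauss m i).const_mul _

lemma integrable_poly_pdf (m : ℝ) (q : Polynomial ℝ) :
    Integrable (fun x : ℝ => q.eval x * gaussianPDFReal m 1 x) := by
  have h := integrable_poly_gauss m q
  rw [gaussianReal_of_var_ne_zero _ one_ne_zero,
    integrable_withDensity_iff_integrable_smul' (measurable_gaussianPDF m 1)
      (Eventually.of_forall fun x => gaussianPDF_lt_top)] at h
  refine h.congr (Eventually.of_forall fun x => ?_)
  simp [toReal_gaussianPDF, mul_comm]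

lemma pdf_deriv (m x : ℝ) :
    HasDerivAt (gaussianPDFReal m 1) (-(x - m) * gaussianPDFReal m 1 x) x := by
  have h0 : HasDerivAt (fun x : ℝ => x - m) 1 x := (hasDerivAt_id x).sub_const m
  have h1 : HasDerivAt (fun x : ℝ => -(x - m) ^ 2 / (2 * ((1 : ℝ≥0) : ℝ))) (-(x - m)) x := by
    have := ((h0.fun_pow 2).fun_neg).div_const (2 * ((1 : ℝ≥0) : ℝ))
    refine this.congr_deriv ?_
    simp
    ring
  have h2 := (h1.exp).const_mul (√(2 * Real.pi * ((1 : ℝ≥0) : ℝ)))⁻¹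
  rw [gaussianPDFReal_def]
  refine h2.congr_deriv ?_
  ring

lemma stein (m : ℝ) (q : Polynomial ℝ) :
    ∫ x, (x - m) * q.eval x ∂(gaussianReal m 1)
      = ∫ x, (Polynomial.derivative q).eval x ∂(gaussianReal m 1) := by
  rw [integral_gaussianReal_eq_integral_smul one_ne_zero,
    integral_gaussianReal_eq_integral_smul one_ne_zero]
  have h := integral_mul_deriv_eq_deriv_mul_of_integrable
    (u := fun x => q.eval x) (v := gaussianPDFReal m 1)
    (u' := fun x => (Polynomial.derivative q).eval x)
    (v' := fun x => -(x - m) * gaussianPDFReal m 1 x)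
    (fun x _ => q.hasDerivAt x) (fun x _ => pdf_deriv m x) ?_ (integrable_poly_pdf m _)
    (integrable_poly_pdf m _)
  · have h' := congrArg Neg.neg h
    rw [neg_neg, ← integral_neg] at h'
    refine Eq.trans ?_ (h'.trans ?_)
    · congr 1; ext x; simp; ring
    · congr 1; ext x; simp; ring
  · refine (integrable_poly_pdf m (-(q * (Polynomial.X - Polynomial.C m)))).congr
      (Eventually.of_forall fun x => ?_)
    simp; ring

lemma He_mean (m : ℝ) (n : ℕ) : ∫ x, (He n).eval x ∂(gaussianReal m 1) = m ^ n := by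
  induction n with
  | zero => simp [He]
  | succ n ih =>
    have h := stein m (He n)
    have e : ∀ x : ℝ, (He (n+1)).eval x = ((x - m) * (He n).eval x
        - (Polynomial.derivative (He n)).eval x) + m * (He n).eval x := by
      intro x; simp [He]; ring
    simp only [e]
    have i1 : Integrable (fun x : ℝ => (x - m) * (He n).eval x) (gaussianReal m 1) := by
      refine (integrable_poly_gauss m ((Polynomial.X - Polynomial.C m) * He n)).congr
        (Eventually.of_forall fun x => ?_)
      simp
    have i2 : Integrable (fun x : ℝ => (x - m) * (He n).eval x -
        (Polynomial.derivative (He n)).eval x) (gaussianReal m 1) :=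
      i1.sub (integrable_poly_gauss m _)
    rw [integral_add i2 ((integrable_poly_gauss m _).const_mul _),
      integral_sub i1 (integrable_poly_gauss m _), h, integral_const_mul, ih]
    ring

lemma He_step (n : ℕ) (q : Polynomial ℝ) :
    ∫ x, (He (n+1)).eval x * q.eval x ∂(gaussianReal 0 1)
      = ∫ x, (He n).eval x * (Polynomial.derivative q).eval x ∂(gaussianReal 0 1) := by
  have h := stein 0 (He n * q)
  have e1 : ∀ x : ℝ, (He (n+1)).eval x * q.eval x = (x - 0) * (He n * q).eval x
      - (Polynomial.derivative (He n) * q).eval x := by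
    intro x; simp [He]; ring
  have e2 : ∀ x : ℝ, (He n).eval x * (Polynomial.derivative q).eval x =
     (Polynomial.derivative (He n * q)).eval x
      - (Polynomial.derivative (He n) * q).eval x := by
    intro x; simp
  have i1 : Integrable (fun x : ℝ => (x - 0) * (He n * q).eval x) (gaussianReal 0 1) := by
    refine (integrable_poly_gauss 0 (Polynomial.X * (He n * q))).congr
      (Eventually.of_forall fun x => ?_)
    simp
  simp only [e1, e2]
  rw [integral_sub i1 (integrable_poly_gauss 0 _),
    integral_sub (integrable_poly_gauss 0 _) (integrable_poly_gauss 0 _), h]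

lemma He_orth (a b : ℕ) : ∫ x, (He a).eval x * (He b).eval x ∂(gaussianReal 0 1)
    = if a = b then (a.factorial : ℝ) else 0 := by
  induction a generalizing b with
  | zero =>
    have := He_mean 0 b
    simp only [He, Polynomial.eval_one, one_mul, this]
    by_cases hb : b = 0
    · simp [hb]
    · simp [hb, Ne.symm hb]
  | succ a ih =>
    rw [He_step]
    cases b with
    | zero => simp [He]
    | succ b =>
      rw [He_deriv]
      have : ∀ x : ℝ, (He a).eval x * ((b + 1 : ℝ) • He b).eval x
        = (b + 1) * ((He a).eval x * (He b).eval x) := by intro x; simp; ring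
      simp only [this]
      rw [integral_const_mul, ih]
      by_cases hb : a = b
      · subst hb; simp [Nat.factorial_succ]
      · simp [hb]

lemma pow_He (n : ℕ) : ∃ c : ℕ → ℝ, ∀ x : ℝ,
    x ^ n = ∑ m ∈ Finset.range (n + 1), c m * (He m).eval x := by
  have key : ∀ n : ℕ, ∀ q : Polynomial ℝ, q.natDegree ≤ n → ∃ c : ℕ → ℝ, ∀ x : ℝ,
    q.eval x = ∑ m ∈ Finset.range (n + 1), c m * (He m).eval x := by
    intro n
    induction n with
    | zero =>
      intro q hq
      obtain ⟨a, rfl⟩ := Polynomial.natDegree_eq_zero.1 (Nat.le_zero.1 hq)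
      exact ⟨fun _ => a, fun x => by simp [He]⟩
    | succ n ih =>
      intro q hq
      have hd : ∀ k, (He k).natDegree ≤ k ∧ (He k).coeff k = 1 := by
        intro k
        induction k with
        | zero => simp [He]
        | succ k ihk =>
          have hdd : (Polynomial.derivative (He k)).natDegree ≤ k :=
            (Polynomial.natDegree_derivative_le _).trans ((Nat.sub_le _ _).trans ihk.1)
          constructor
          · rw [He]
            refine (Polynomial.natDegree_sub_le _ _).trans (max_le ?_ (hdd.trans k.le_succ))
            refine (Polynomial.natDegree_mul_le).trans ?_
            have := Polynomial.natDegree_X_le (R := ℝ)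
            have := ihk.1
            omega
          · rw [He, Polynomial.coeff_sub, Polynomial.coeff_X_mul, ihk.2,
              Polynomial.coeff_eq_zero_of_natDegree_lt (by omega)]
            simp
      obtain ⟨c, hc⟩ := ih (q - Polynomial.C (q.coeff (n+1)) * He (n+1)) (by
        rw [Polynomial.natDegree_le_iff_coeff_eq_zero]
        intro N hN
        rcases Nat.lt_or_ge (n+1) N with h | h
        · rw [Polynomial.coeff_sub, Polynomial.coeff_C_mul,
            Polynomial.coeff_eq_zero_of_natDegree_lt (lt_of_le_of_lt hq h),
            Polynomial.coeff_eq_zero_of_natDegree_lt (lt_of_le_of_lt (hd (n+1)).1 h)]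
          simp
        · obtain rfl : N = n + 1 := by omega
          simp [(hd (n+1)).2])
      refine ⟨fun m => if m = n + 1 then q.coeff (n+1) else c m, fun x => ?_⟩
      have := hc x
      rw [Finset.sum_range_succ]
      rw [Finset.sum_congr rfl (g := fun m => c m * (He m).eval x)]
      · rw [← this]; simp
      · intro m hm
        have : m ≠ n + 1 := by have := Finset.mem_range.1 hm; omega
        simp [this]
  obtain ⟨c, hc⟩ := key n (Polynomial.X ^ n) (by simp)
  exact ⟨c, fun x => by simpa using hc x⟩

def HH {p m : ℕ} (a : Fin m → Fin p → ℕ) (X : Fin m → Fin p → ℝ) : ℝ :=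
  ∏ i, ∏ j, (He (a i j)).eval (X i j)

def degI {p m : ℕ} (a : Fin m → Fin p → ℕ) : ℕ := ∑ i, ∑ j, a i j

def factI {p m : ℕ} (a : Fin m → Fin p → ℕ) : ℝ := ∏ i, ∏ j, ((a i j).factorial : ℝ)

def box (p m N : ℕ) : Finset (Fin m → Fin p → ℕ) :=
  Fintype.piFinset fun _ => Fintype.piFinset fun _ => Finset.range (N + 1)

def idx (p m D : ℕ) : Finset (Fin m → Fin p → ℕ) := (box p m D).filter fun a => degI a ≤ D

lemma prod_sum_box {p m N : ℕ} (g : Fin m → Fin p → ℕ → ℝ) :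
    ∏ i, ∏ j, ∑ l ∈ Finset.range (N + 1), g i j l = ∑ a ∈ box p m N, ∏ i, ∏ j, g i j (a i j) := by
  unfold box
  simp only [Finset.prod_univ_sum]

lemma span_HH {p m D : ℕ} (f : MvPolynomial (Fin p × Fin m) ℝ) (hf : f.totalDegree ≤ D) :
    ∃ c : (Fin m → Fin p → ℕ) → ℝ, ∀ X : Fin m → Fin p → ℝ,
      MvPolynomial.eval (fun v => X v.2 v.1) f = ∑ a ∈ idx p m D, c a * HH a X := by
  choose c hc using pow_He
  set cc : ℕ → ℕ → ℝ := fun n l => if l ≤ n then c n l else 0 with hcc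
  have hpow : ∀ n, n ≤ D → ∀ x : ℝ, x ^ n = ∑ l ∈ Finset.range (D + 1), cc n l * (He l).eval x := by
    intro n hn x
    rw [hc n x]
    rw [← Finset.sum_subset (Finset.range_mono (Nat.succ_le_succ hn))]
    · refine Finset.sum_congr rfl fun l hl => ?_
      have : l ≤ n := Nat.lt_succ_iff.1 (Finset.mem_range.1 hl)
      simp [hcc, this]
    · intro l _ hl
      have : ¬ l ≤ n := fun h => hl (Finset.mem_range.2 (Nat.lt_succ_of_le h))
      simp [hcc, this]
  refine ⟨fun a => ∑ d ∈ f.support, f.coeff d * ∏ i, ∏ j, cc (d (j, i)) (a i j), fun X => ?_⟩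
  rw [MvPolynomial.eval_eq']
  simp only [Finset.sum_mul]
  rw [Finset.sum_comm]
  refine Finset.sum_congr rfl fun d hd => ?_
  have hdeg : ∑ i : Fin m, ∑ j : Fin p, d (j, i) ≤ D := by
    have h1 := MvPolynomial.le_totalDegree hd
    rw [Finsupp.sum_fintype _ _ (by simp)] at h1
    rw [Fintype.sum_prod_type_right] at h1
    exact h1.trans hf
  have hle : ∀ i j, d (j, i) ≤ D := fun i j =>
    ((Finset.single_le_sum (f := fun j => d (j, i)) (fun _ _ => Nat.zero_le _)
      (Finset.mem_univ j)).trans (Finset.single_le_sum (f := fun i => ∑ j, d (j, i))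
      (fun _ _ => Nat.zero_le _) (Finset.mem_univ i))).trans hdeg
  rw [Fintype.prod_prod_type_right]
  simp only [mul_assoc]
  rw [← Finset.mul_sum]
  congr 1
  have : ∏ i : Fin m, ∏ j : Fin p, X i j ^ d (j, i)
    = ∏ i : Fin m, ∏ j : Fin p, ∑ l ∈ Finset.range (D + 1), cc (d (j,i)) l * (He l).eval (X i j) :=
    Finset.prod_congr rfl fun i _ => Finset.prod_congr rfl fun j _ => hpow _ (hle i j) _
  rw [this, prod_sum_box]
  unfold idx
  rw [Finset.sum_filter]
  refine Finset.sum_congr rfl fun a _ => ?_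
  have e : ∏ i, ∏ j, cc (d (j,i)) (a i j) * (He (a i j)).eval (X i j)
    = (∏ i, ∏ j, cc (d (j,i)) (a i j)) * HH a X := by
    simp only [HH, Finset.prod_mul_distrib]
  rw [e]
  split_ifs with h
  · rfl
  · have : ∃ i j, d (j, i) < a i j := by
      by_contra! hcon
      exact h ((Finset.sum_le_sum fun i _ => Finset.sum_le_sum fun j _ => hcon i j).trans hdeg)
    obtain ⟨i, j, hij⟩ := this
    have hz : ∏ i, ∏ j, cc (d (j,i)) (a i j) = 0 :=
      Finset.prod_eq_zero (Finset.mem_univ i) (Finset.prod_eq_zero (Finset.mem_univ j)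
        (if_neg (not_le.2 hij)))
    rw [hz, zero_mul]

instance gaussPi_prob {p : ℕ} (μ : Fin p → ℝ) : IsProbabilityMeasure (gaussPi μ) := by
  unfold gaussPi; infer_instance

lemma gaussPi_integrable {p : ℕ} (μ : Fin p → ℝ) (q : Fin p → Polynomial ℝ) :
    Integrable (fun x : Fin p → ℝ => ∏ j, (q j).eval (x j)) (gaussPi μ) :=
  Integrable.fintype_prod (f := fun j x => (q j).eval x) fun j => integrable_poly_gauss _ _

lemma gaussPi_integral {p : ℕ} (μ : Fin p → ℝ) (q : Fin p → Polynomial ℝ) :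
    ∫ x : Fin p → ℝ, ∏ j, (q j).eval (x j) ∂(gaussPi μ)
      = ∏ j, ∫ x, (q j).eval x ∂(gaussianReal (μ j) 1) :=
  integral_fintype_prod_eq_prod (fun j x => (q j).eval x)

lemma null_integrable {p m : ℕ} (q : Fin m → Fin p → Polynomial ℝ) :
    Integrable (fun X : Fin m → Fin p → ℝ => ∏ i, ∏ j, (q i j).eval (X i j)) (nullLaw p m) :=
  Integrable.fintype_prod (f := fun i (x : Fin p → ℝ) => ∏ j, (q i j).eval (x j))
    fun i => gaussPi_integrable _ _

lemma HH_mul {p m : ℕ} (a b : Fin m → Fin p → ℕ) (X : Fin m → Fin p → ℝ) :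
    HH a X * HH b X = ∏ i, ∏ j, (He (a i j) * He (b i j)).eval (X i j) := by
  simp [HH, Finset.prod_mul_distrib]

lemma HH_mul_integrable {p m : ℕ} (a b : Fin m → Fin p → ℕ) :
    Integrable (fun X => HH a X * HH b X) (nullLaw p m) := by
  simp only [HH_mul]; exact null_integrable _

lemma HH_orth {p m : ℕ} (a b : Fin m → Fin p → ℕ) :
    ∫ X, HH a X * HH b X ∂(nullLaw p m) = if a = b then factI a else 0 := by
  simp only [HH_mul]
  unfold nullLaw
  rw [integral_fintype_prod_eq_prod (fun i (x : Fin p → ℝ) =>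
    ∏ j, (He (a i j) * He (b i j)).eval (x j))]
  simp only [gaussPi_integral]
  simp only [Polynomial.eval_mul, He_orth]
  split_ifs with h
  · subst h; simp [factI]
  · have : ∃ i j, a i j ≠ b i j := by
      by_contra! hc
      exact h (funext fun i => funext fun j => hc i j)
    obtain ⟨i, j, hij⟩ := this
    exact Finset.prod_eq_zero (Finset.mem_univ i)
      (Finset.prod_eq_zero (Finset.mem_univ j) (by simp [hij]))

lemma null_sq {p m : ℕ} (I : Finset (Fin m → Fin p → ℕ)) (c : (Fin m → Fin p → ℕ) → ℝ) :
    ∫ X, (∑ a ∈ I, c a * HH a X) ^ 2 ∂(nullLaw p m) = ∑ a ∈ I, c a ^ 2 * factI a := by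
  have e : ∀ X : Fin m → Fin p → ℝ, (∑ a ∈ I, c a * HH a X) ^ 2
      = ∑ a ∈ I, ∑ b ∈ I, (c a * c b) * (HH a X * HH b X) := by
    intro X
    rw [sq, Finset.sum_mul_sum]
    refine Finset.sum_congr rfl fun a _ => Finset.sum_congr rfl fun b _ => by ring
  simp only [e]
  rw [integral_finsetSum _ fun a _ => integrable_finsetSum _ fun b _ =>
    (HH_mul_integrable a b).const_mul _]
  refine Finset.sum_congr rfl fun a ha => ?_
  rw [integral_finsetSum _ fun b _ => (HH_mul_integrable a b).const_mul _]
  simp only [integral_const_mul, HH_orth]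
  simp [ha, sq]

/-- one-sample moment -/
def mom {p : ℕ} (lab : Prop) [Decidable lab] (μ : Fin p → ℝ) (a : Fin p → ℕ) : ℝ :=
  if lab then ∏ j, μ j ^ a j else (∏ j, μ j ^ a j + ∏ j, (-μ j) ^ a j) / 2

def samp {p : ℕ} (lab : Prop) [Decidable lab] (μ : Fin p → ℝ) : Measure (Fin p → ℝ) :=
  if lab then gaussPi μ else (2 : ℝ≥0∞)⁻¹ • gaussPi μ + (2 : ℝ≥0∞)⁻¹ • gaussPi (fun j => -μ j)

instance samp_prob {p : ℕ} (lab : Prop) [Decidable lab] (μ : Fin p → ℝ) :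
    IsProbabilityMeasure (samp lab μ) := by
  unfold samp
  split_ifs
  · infer_instance
  · constructor
    simp [ENNReal.inv_two_add_inv_two]

lemma samp_integrable {p : ℕ} (lab : Prop) [Decidable lab] (μ : Fin p → ℝ)
    (q : Fin p → Polynomial ℝ) :
    Integrable (fun x : Fin p → ℝ => ∏ j, (q j).eval (x j)) (samp lab μ) := by
  unfold samp
  split_ifs
  · exact gaussPi_integrable _ _
  · exact ((gaussPi_integrable _ _).smul_measure (by simp)).add_measure
      ((gaussPi_integrable _ _).smul_measure (by simp))

lemma samp_integral {p : ℕ} (lab : Prop) [Decidable lab] (μ : Fin p → ℝ) (a : Fin p → ℕ) :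
    ∫ x : Fin p → ℝ, ∏ j, (He (a j)).eval (x j) ∂(samp lab μ) = mom lab μ a := by
  unfold samp mom
  split_ifs
  · rw [gaussPi_integral]; simp [He_mean]
  · rw [integral_add_measure ((gaussPi_integrable _ _).smul_measure (by simp))
      ((gaussPi_integrable _ _).smul_measure (by simp)), integral_smul_measure,
      integral_smul_measure, gaussPi_integral, gaussPi_integral]
    simp only [He_mean]
    simp
    ring

lemma alt_comp_integrable {p m L : ℕ} (μ : Fin p → ℝ) (a : Fin m → Fin p → ℕ) :
    Integrable (fun X => HH a X) (Measure.pi fun i : Fin m => samp ((i : ℕ) < L) μ) :=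
  Integrable.fintype_prod (f := fun i (x : Fin p → ℝ) => ∏ j, (He (a i j)).eval (x j))
    fun i => samp_integrable _ _ _

lemma alt_comp_integral {p m L : ℕ} (μ : Fin p → ℝ) (a : Fin m → Fin p → ℕ) :
    ∫ X, HH a X ∂(Measure.pi fun i : Fin m => samp ((i : ℕ) < L) μ)
      = ∏ i : Fin m, mom ((i : ℕ) < L) μ (a i) := by
  unfold HH
  rw [integral_fintype_prod_eq_prod (fun i (x : Fin p → ℝ) => ∏ j, (He (a i j)).eval (x j))]
  simp only [samp_integral]

def kset (p k : ℕ) : Finset (Finset (Fin p)) := (Finset.univ : Finset (Fin p)).powersetCard k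

lemma alt_integral {p k L n : ℕ} (lam : ℝ) (I : Finset (Fin (L + n) → Fin p → ℕ))
    (c : (Fin (L + n) → Fin p → ℕ) → ℝ) :
    ∫ X, (∑ a ∈ I, c a * HH a X) ∂(altLaw p k L n lam) = ∑ a ∈ I, c a *
      (((kset p k).card : ℝ)⁻¹ * ∑ S ∈ kset p k,
        ∏ i : Fin (L + n), mom ((i : ℕ) < L) (muVec p k lam S) (a i)) := by
  have e : altLaw p k L n lam = (((kset p k).card : ℝ≥0∞))⁻¹ • ∑ S ∈ kset p k,
      Measure.pi fun i : Fin (L + n) => samp ((i : ℕ) < L) (muVec p k lam S) := rfl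
  rw [e, integral_smul_measure, integral_finsetSum_measure fun S _ =>
    integrable_finsetSum _ fun a _ => (alt_comp_integrable _ a).const_mul _]
  simp only [integral_finsetSum _ fun a (_ : a ∈ I) =>
    (alt_comp_integrable (L := L) (muVec p k lam _) a).const_mul (c a), integral_const_mul,
    alt_comp_integral]
  rw [Finset.sum_comm]
  simp only [← Finset.mul_sum]
  simp only [ENNReal.toReal_inv, ENNReal.toReal_natCast, smul_eq_mul, Finset.mul_sum]
  refine Finset.sum_congr rfl fun a _ => Finset.sum_congr rfl fun S _ => by ring

theorem lowdeg_bound {p k L n D : ℕ} (lam : ℝ) (f : MvPolynomial (Fin p × Fin (L + n)) ℝ)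
    (hf : f.totalDegree ≤ D) :
    (∫ X : Fin (L + n) → Fin p → ℝ,
      MvPolynomial.eval (fun v => X v.2 v.1) f ∂(altLaw p k L n lam)) ^ 2
    ≤ (∑ a ∈ idx p (L + n) D, (((kset p k).card : ℝ)⁻¹ * ∑ S ∈ kset p k,
        ∏ i : Fin (L + n), mom ((i : ℕ) < L) (muVec p k lam S) (a i)) ^ 2 / factI a) *
      ∫ X : Fin (L + n) → Fin p → ℝ,
        (MvPolynomial.eval (fun v => X v.2 v.1) f) ^ 2 ∂(nullLaw p (L + n)) := by
  obtain ⟨c, hc⟩ := span_HH f hf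
  simp only [hc]
  rw [alt_integral, null_sq]
  have hpos : ∀ a : Fin (L + n) → Fin p → ℕ, 0 < factI a := fun a =>
    Finset.prod_pos fun i _ => Finset.prod_pos fun j _ => by exact_mod_cast Nat.factorial_pos _
  refine Finset.sum_sq_le_sum_mul_sum_of_sq_le_mul _ (fun a _ => ?_) (fun a _ => ?_) fun a _ => ?_
  · exact div_nonneg (sq_nonneg _) (hpos a).le
  · exact mul_nonneg (sq_nonneg _) (hpos a).le
  · have := (hpos a).ne'
    refine le_of_eq ?_
    field_simp

lemma mom_nonneg {p : ℕ} (lab : Prop) [Decidable lab] (μ : Fin p → ℝ) (hμ : ∀ j, 0 ≤ μ j)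
    (a : Fin p → ℕ) : 0 ≤ mom lab μ a := by
  have h0 : 0 ≤ ∏ j, μ j ^ a j := Finset.prod_nonneg fun j _ => pow_nonneg (hμ j) _
  unfold mom
  split_ifs
  · exact h0
  · have h1 : |∏ j, (-μ j) ^ a j| = ∏ j, μ j ^ a j := by
      rw [Finset.abs_prod]
      exact Finset.prod_congr rfl fun j _ => by rw [abs_pow, abs_neg, abs_of_nonneg (hμ j)]
    have := (abs_le.1 h1.le).1
    linarith

def TT (N : ℕ) (y : ℝ) : ℝ := ∑ l ∈ Finset.range (N + 1), y ^ l / l.factorial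

lemma TT_tendsto (y : ℝ) : Tendsto (fun N => TT N y) atTop (nhds (Real.exp y)) := by
  have h := (NormedSpace.expSeries_div_hasSum_exp y).tendsto_sum_nat
  rw [← Real.exp_eq_exp_ℝ] at h
  exact (tendsto_add_atTop_iff_nat 1).2 h

lemma prod_TT {p : ℕ} (N : ℕ) (y : Fin p → ℝ) : ∏ j, TT N (y j) =
    ∑ b ∈ Fintype.piFinset fun _ : Fin p => Finset.range (N + 1),
      ∏ j, (y j ^ b j / (b j).factorial) := by
  unfold TT
  rw [Finset.prod_univ_sum]

def gk {p : ℕ} (lab : Prop) [Decidable lab] (μ ν : Fin p → ℝ) (r : ℝ) (b : Fin p → ℕ) : ℝ :=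
  mom lab μ b * mom lab ν b * r ^ (∑ j, b j) / ∏ j, ((b j).factorial : ℝ)

def gsum {p : ℕ} (lab : Prop) [Decidable lab] (μ ν : Fin p → ℝ) (r : ℝ) (N : ℕ) : ℝ :=
  if lab then ∏ j, TT N (r * (μ j * ν j)) else
    (∏ j, TT N (r * (μ j * ν j)) + ∏ j, TT N (-(r * (μ j * ν j)))) / 2

lemma gk_sum {p : ℕ} (lab : Prop) [Decidable lab] (μ ν : Fin p → ℝ) (r : ℝ) (N : ℕ) :
    ∑ b ∈ Fintype.piFinset fun _ : Fin p => Finset.range (N + 1), gk lab μ ν r b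
      = gsum lab μ ν r N := by
  unfold gk gsum mom
  split_ifs
  · rw [prod_TT]
    refine Finset.sum_congr rfl fun b _ => ?_
    simp only [mul_pow, Finset.prod_div_distrib, Finset.prod_mul_distrib, Finset.prod_pow_eq_pow_sum]
    ring
  · rw [prod_TT, prod_TT, ← Finset.sum_add_distrib, Finset.sum_div]
    refine Finset.sum_congr rfl fun b _ => ?_
    have hn : ∀ w : Fin p → ℝ, ∏ j, (-w j) ^ b j = (∏ j, (-1 : ℝ) ^ b j) * ∏ j, w j ^ b j := by
      intro w
      rw [← Finset.prod_mul_distrib]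
      exact Finset.prod_congr rfl fun j _ => by rw [← mul_pow]; simp
    have h1 : (∏ j, (-1 : ℝ) ^ b j) * (∏ j, (-1 : ℝ) ^ b j) = 1 := by
      rw [← Finset.prod_mul_distrib]
      exact Finset.prod_eq_one fun j _ => by rw [← mul_pow]; simp
    simp only [Finset.prod_div_distrib]
    rw [hn μ, hn ν, hn fun j => r * (μ j * ν j)]
    simp only [mul_pow, Finset.prod_mul_distrib, Finset.prod_pow_eq_pow_sum]
    rw [Finset.prod_pow_eq_pow_sum] at h1
    generalize (-1 : ℝ) ^ (∑ j, b j) = e at *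
    generalize ∏ j, ((b j).factorial : ℝ) = F
    have h2 : e ^ 2 = 1 := by rw [sq]; exact h1
    rw [← add_div, div_div, mul_comm F 2, ← div_div]
    congr 1
    ring_nf
    rw [h2]
    ring

lemma gsum_tendsto {p : ℕ} (lab : Prop) [Decidable lab] (μ ν : Fin p → ℝ) (r : ℝ) :
    Tendsto (fun N => gsum lab μ ν r N) atTop (nhds (if lab then Real.exp (r * ∑ j, μ j * ν j)
      else Real.cosh (r * ∑ j, μ j * ν j))) := by
  have h1 : Tendsto (fun N => ∏ j, TT N (r * (μ j * ν j))) atTop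
      (nhds (Real.exp (r * ∑ j, μ j * ν j))) := by
    rw [Finset.mul_sum, Real.exp_sum]
    exact tendsto_finsetProd _ fun j _ => TT_tendsto _
  have h2 : Tendsto (fun N => ∏ j, TT N (-(r * (μ j * ν j)))) atTop
      (nhds (Real.exp (-(r * ∑ j, μ j * ν j)))) := by
    rw [Finset.mul_sum, ← Finset.sum_neg_distrib, Real.exp_sum]
    exact tendsto_finsetProd _ fun j _ => TT_tendsto _
  unfold gsum
  split_ifs
  · exact h1
  · rw [Real.cosh_eq]
    exact (h1.add h2).div_const 2

theorem kernel_bound {p L n D : ℕ} (μ ν : Fin p → ℝ) (hμ : ∀ j, 0 ≤ μ j) (hν : ∀ j, 0 ≤ ν j)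
    (r : ℝ) (hr : 0 < r) (hr1 : r ≤ 1) :
    ∑ a ∈ idx p (L + n) D, (∏ i : Fin (L + n), mom ((i : ℕ) < L) μ (a i)) *
      (∏ i : Fin (L + n), mom ((i : ℕ) < L) ν (a i)) / factI a
    ≤ (r ^ D)⁻¹ * (Real.exp (r * ∑ j, μ j * ν j) ^ L * Real.cosh (r * ∑ j, μ j * ν j) ^ n) := by
  have gk_nonneg : ∀ (i : Fin (L + n)) b, 0 ≤ gk ((i : ℕ) < L) μ ν r b := fun i b => by
    unfold gk
    have := mom_nonneg ((i : ℕ) < L) μ hμ b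
    have := mom_nonneg ((i : ℕ) < L) ν hν b
    positivity
  have hlim : Tendsto (fun N => (r ^ D)⁻¹ * ∏ i : Fin (L + n), gsum ((i : ℕ) < L) μ ν r N) atTop
      (nhds ((r ^ D)⁻¹ *
        (Real.exp (r * ∑ j, μ j * ν j) ^ L * Real.cosh (r * ∑ j, μ j * ν j) ^ n))) := by
    refine Tendsto.const_mul _ ?_
    have := tendsto_finsetProd (Finset.univ : Finset (Fin (L + n)))
      (fun i _ => gsum_tendsto ((i : ℕ) < L) μ ν r)
    rw [Fin.prod_univ_add] at this
    simpa using this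
  refine ge_of_tendsto hlim (eventually_atTop.2 ⟨D, fun N hN => ?_⟩)
  simp only [← gk_sum, Finset.prod_univ_sum]
  have hsub : idx p (L + n) D ⊆ box p (L + n) N := by
    intro a ha
    have := (Finset.mem_filter.1 ha).1
    simp only [box, Fintype.mem_piFinset, Finset.mem_range] at this ⊢
    intro i j
    have := this i j
    omega
  refine le_trans ?_ (mul_le_mul_of_nonneg_left (Finset.sum_le_sum_of_subset_of_nonneg hsub
    fun a _ _ => Finset.prod_nonneg fun i _ => gk_nonneg i (a i)) (by positivity))
  rw [Finset.mul_sum]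
  refine Finset.sum_le_sum fun a ha => ?_
  have hd : degI a ≤ D := (Finset.mem_filter.1 ha).2
  have e : ∏ i : Fin (L + n), gk ((i : ℕ) < L) μ ν r (a i) = r ^ degI a *
      ((∏ i : Fin (L + n), mom ((i : ℕ) < L) μ (a i)) *
      (∏ i : Fin (L + n), mom ((i : ℕ) < L) ν (a i)) / factI a) := by
    unfold gk factI degI
    rw [Finset.prod_div_distrib, Finset.prod_mul_distrib, Finset.prod_mul_distrib,
      Finset.prod_pow_eq_pow_sum]
    ring
  rw [e, ← mul_assoc]
  refine le_mul_of_one_le_left ?_ ?_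
  · refine div_nonneg (mul_nonneg (Finset.prod_nonneg fun i _ => mom_nonneg _ _ hμ _)
      (Finset.prod_nonneg fun i _ => mom_nonneg _ _ hν _)) ?_
    unfold factI
    positivity
  · rw [inv_mul_eq_div, one_le_div (by positivity)]
    exact pow_le_pow_of_le_one hr.le hr1 hd

lemma choose_ratio (p k t : ℕ) (ht : t ≤ k) (hk : k ≤ p) :
    (p - t).choose (k - t) * p ^ t ≤ p.choose k * k ^ t := by
  induction t with
  | zero => simp
  | succ t ih =>
    have ih := ih (by omega)
    obtain ⟨a, ha⟩ : ∃ a, k = t + 1 + a := ⟨k - (t+1), by omega⟩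
    obtain ⟨b, hb⟩ : ∃ b, p = t + 1 + b := ⟨p - (t+1), by omega⟩
    have e1 : k - (t+1) = a := by omega
    have e2 : p - (t+1) = b := by omega
    have e3 : k - t = a + 1 := by omega
    have e4 : p - t = b + 1 := by omega
    rw [e1, e2]
    rw [e3, e4] at ih
    have h := Nat.add_one_mul_choose_eq b a
    have h2 : (a + 1) * p ≤ k * (b + 1) := by
      rw [ha, hb]
      have : a ≤ b := by omega
      nlinarith
    have : (b + 1) * (b.choose a * p ^ (t+1)) ≤ (b + 1) * (p.choose k * k ^ (t+1)) := by
      calc (b + 1) * (b.choose a * p ^ (t+1)) = ((b+1) * b.choose a) * p ^ t * p := by ring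
        _ = ((b+1).choose (a+1) * p ^ t) * ((a + 1) * p) := by rw [h]; ring
        _ ≤ (p.choose k * k ^ t) * (k * (b + 1)) := Nat.mul_le_mul ih h2
        _ = _ := by ring
    exact Nat.le_of_mul_le_mul_left this (by omega)

lemma count_super {p k : ℕ} (hk : k ≤ p) (hp : 0 < p) (T : Finset (Fin p)) (hT : T.card ≤ k) :
    (((kset p k).filter fun S' => T ⊆ S').card : ℝ) ≤ (kset p k).card * ((k : ℝ) / p) ^ T.card := by
  have h1 : ((kset p k).filter fun S' => T ⊆ S').card ≤ (p - T.card).choose (k - T.card) := by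
    have : (p - T.card).choose (k - T.card)
        = ((Finset.univ \ T).powersetCard (k - T.card)).card := by
      rw [Finset.card_powersetCard, Finset.card_sdiff_of_subset (Finset.subset_univ _)]
      simp
    rw [this]
    refine Finset.card_le_card_of_injOn (fun S' => S' \ T) ?_ ?_
    · intro S' hS'
      have hS' := Finset.mem_filter.1 (Finset.mem_coe.1 hS')
      have hc := (Finset.mem_powersetCard.1 hS'.1).2
      refine Finset.mem_coe.2 (Finset.mem_powersetCard.2
        ⟨Finset.sdiff_subset_sdiff (Finset.subset_univ _) le_rfl, ?_⟩)
      rw [Finset.card_sdiff_of_subset hS'.2, hc]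
    · intro A hA B hB hAB
      have hA := (Finset.mem_filter.1 (Finset.mem_coe.1 hA)).2
      have hB := (Finset.mem_filter.1 (Finset.mem_coe.1 hB)).2
      have hAB : A \ T = B \ T := hAB
      rw [← Finset.sdiff_union_of_subset hA, ← Finset.sdiff_union_of_subset hB, hAB]
  have h2 := choose_ratio p k T.card hT hk
  have hN : (kset p k).card = p.choose k := by simp [kset]
  rw [hN, div_pow, ← mul_div_assoc, le_div_iff₀ (by positivity)]
  calc _ ≤ ((p - T.card).choose (k - T.card) : ℝ) * (p : ℝ) ^ T.card := by
        gcongr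
    _ ≤ _ := by exact_mod_cast h2

lemma overlap_mgf {p k : ℕ} (hk : k ≤ p) (hp : 0 < p) (q : ℝ) (hq : 1 ≤ q) (S : Finset (Fin p))
    (hS : S ∈ kset p k) :
    ∑ S' ∈ kset p k, q ^ (S ∩ S').card ≤ (kset p k).card * Real.exp (q * (k : ℝ) ^ 2 / p) := by
  have hSc : S.card = k := (Finset.mem_powersetCard.1 hS).2
  have hp' : (0 : ℝ) < p := by exact_mod_cast hp
  have e : ∀ S' : Finset (Fin p), q ^ (S ∩ S').card
      = ∑ T ∈ S.powerset, if T ⊆ S' then (q - 1) ^ T.card else 0 := by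
    intro S'
    have := Finset.sum_pow_mul_eq_add_pow (q - 1) 1 (S ∩ S')
    rw [sub_add_cancel] at this
    rw [← this, ← Finset.sum_filter]
    refine Finset.sum_congr ?_ fun T _ => by simp
    ext T
    simp only [Finset.mem_powerset, Finset.mem_filter, Finset.subset_inter_iff]
  simp only [e]
  rw [Finset.sum_comm]
  have hb : ∀ T ∈ S.powerset, (∑ S' ∈ kset p k, if T ⊆ S' then (q - 1) ^ T.card else 0)
      ≤ (kset p k).card * (((q - 1) * ((k : ℝ) / p)) ^ T.card * 1 ^ (S.card - T.card)) := by
    intro T hT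
    rw [← Finset.sum_filter, Finset.sum_const, nsmul_eq_mul, mul_pow, one_pow, mul_one]
    have h1 := count_super hk hp T (by
      rw [← hSc]; exact Finset.card_le_card (Finset.mem_powerset.1 hT))
    have h2 : 0 ≤ (q - 1) ^ T.card := pow_nonneg (by linarith) _
    calc _ ≤ ((kset p k).card * ((k : ℝ) / p) ^ T.card) * (q - 1) ^ T.card := by gcongr
      _ = _ := by ring
  refine (Finset.sum_le_sum hb).trans ?_
  rw [← Finset.mul_sum, Finset.sum_pow_mul_eq_add_pow, hSc]
  refine mul_le_mul_of_nonneg_left ?_ (by positivity)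
  have h0 : 0 ≤ (q - 1) * ((k : ℝ) / p) := mul_nonneg (by linarith) (by positivity)
  calc ((q - 1) * ((k : ℝ) / p) + 1) ^ k ≤ (Real.exp ((q - 1) * ((k : ℝ) / p))) ^ k := by
        gcongr
        exact Real.add_one_le_exp _
    _ = Real.exp (k * ((q - 1) * ((k : ℝ) / p))) := by rw [← Real.exp_nat_mul]
    _ ≤ _ := by
      refine Real.exp_le_exp.2 ?_
      have : q * (k : ℝ) ^ 2 / p - k * ((q - 1) * ((k : ℝ) / p)) = (k : ℝ) ^ 2 / p := by ring
      have : 0 ≤ (k : ℝ) ^ 2 / p := by positivity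
      linarith

lemma scalar_bound (β γ lam c2 ℓ : ℝ) (p k L n D s : ℕ) (hβ : 0 < β) (hlam : 0 < lam)
    (hc2 : 0 < c2) (hℓ : ℓ = Real.log p) (hℓ1 : 1 ≤ ℓ) (hk : 1 ≤ k) (hkp : k < p)
    (hL : (L : ℝ) ≤ 2 * β * (k : ℝ) / lam * Real.log ((p : ℝ) - (k : ℝ)))
    (hn : (n : ℝ) ≤ c2 * (k : ℝ) ^ γ / lam ^ 2) (hD : (D : ℝ) ≤ ℓ ^ 2)
    (hε : c2 * (k : ℝ) ^ γ / (k : ℝ) ^ 2 * ℓ ^ 6 ≤ 1) (hs : s ≤ k) :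
    ∃ r : ℝ, 0 < r ∧ r ≤ 1 ∧ (r ^ D)⁻¹ * (Real.exp (r * (s * (lam / k))) ^ L *
      Real.cosh (r * (s * (lam / k))) ^ n) ≤ Real.exp 1 * Real.exp (1 + 2 * β * ℓ) ^ s := by
  have hk' : (0 : ℝ) < k := by exact_mod_cast hk
  set x : ℝ := s * (lam / k) with hx
  set ε : ℝ := c2 * (k : ℝ) ^ γ / (k : ℝ) ^ 2 with hεd
  have hε0 : 0 ≤ ε := by positivity
  have hx0 : 0 ≤ x := by positivity
  have hLx : L * x ≤ 2 * β * ℓ * s := by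
    have hlog : Real.log ((p : ℝ) - k) ≤ ℓ := by
      rw [hℓ]
      have : (k : ℝ) < p := by exact_mod_cast hkp
      exact Real.log_le_log (by linarith) (by linarith)
    calc L * x ≤ (2 * β * (k : ℝ) / lam * Real.log ((p : ℝ) - (k : ℝ))) * x := by gcongr
      _ = 2 * β * s * Real.log ((p : ℝ) - (k : ℝ)) := by rw [hx]; field_simp
      _ ≤ 2 * β * s * ℓ := by gcongr
      _ = _ := by ring
  have hnx : n * x ^ 2 ≤ ε * s ^ 2 := by
    calc n * x ^ 2 ≤ (c2 * (k : ℝ) ^ γ / lam ^ 2) * x ^ 2 := by gcongr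
      _ = ε * s ^ 2 := by rw [hx, hεd]; field_simp
  have gen : ∀ r : ℝ, 0 < r → r ≤ 1 → Real.exp (r * x) ^ L * Real.cosh (r * x) ^ n
      ≤ Real.exp (2 * β * ℓ * s + r ^ 2 * (ε * s ^ 2) / 2) := by
    intro r hr hr1
    have h1 : Real.cosh (r * x) ^ n ≤ Real.exp (n * ((r * x) ^ 2 / 2)) := by
      rw [Real.exp_nat_mul]
      exact pow_le_pow_left₀ (Real.cosh_pos _).le (Real.cosh_le_exp_half_sq _) n
    rw [← Real.exp_nat_mul]
    calc _ ≤ Real.exp (L * (r * x)) * Real.exp (n * ((r * x) ^ 2 / 2)) := by gcongr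
      _ = Real.exp (L * (r * x) + n * ((r * x) ^ 2 / 2)) := by rw [Real.exp_add]
      _ ≤ _ := by
        refine Real.exp_le_exp.2 (add_le_add ?_ ?_)
        · have : 0 ≤ L * x := by positivity
          nlinarith
        · have := mul_le_mul_of_nonneg_left hnx (sq_nonneg r)
          nlinarith
  have hrhs : Real.exp 1 * Real.exp (1 + 2 * β * ℓ) ^ s = Real.exp (1 + s + 2 * β * ℓ * s) := by
    rw [← Real.exp_nat_mul, ← Real.exp_add]; congr 1; ring
  rw [hrhs]
  have hℓ3 : 1 ≤ ℓ ^ 3 := one_le_pow₀ hℓ1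
  have hs0 : (0 : ℝ) ≤ s := by positivity
  rcases le_or_gt (s : ℝ) (ℓ ^ 3) with hc | hc
  · refine ⟨1, one_pos, le_rfl, ?_⟩
    rw [one_pow, inv_one, one_mul]
    refine (gen 1 one_pos le_rfl).trans (Real.exp_le_exp.2 ?_)
    have h2 : (s : ℝ) ^ 2 ≤ ℓ ^ 6 := by
      calc (s : ℝ) ^ 2 ≤ (ℓ ^ 3) ^ 2 := by gcongr
        _ = ℓ ^ 6 := by ring
    have h3 : ε * s ^ 2 ≤ ε * ℓ ^ 6 := by gcongr
    nlinarith
  · have hs1 : (1 : ℝ) ≤ s := by linarith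
    have hsp : (0 : ℝ) < s := by linarith
    have hsq : 1 ≤ √(s : ℝ) := Real.one_le_sqrt.2 hs1
    refine ⟨(√(s : ℝ))⁻¹, by positivity, inv_le_one_of_one_le₀ hsq, ?_⟩
    have h1 := gen (√(s : ℝ))⁻¹ (by positivity) (inv_le_one_of_one_le₀ hsq)
    have h2 : (((√(s : ℝ))⁻¹) ^ D)⁻¹ ≤ Real.exp (s / 2) := by
      rw [inv_pow, inv_inv]
      have : √(s : ℝ) = Real.exp (Real.log s / 2) := by
        rw [← Real.log_sqrt hs0, Real.exp_log (by positivity)]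
      rw [this, ← Real.exp_nat_mul]
      refine Real.exp_le_exp.2 ?_
      have hls : Real.log s ≤ ℓ := by
        rw [hℓ]
        exact Real.log_le_log hsp (by exact_mod_cast (hs.trans hkp.le))
      have hls0 : 0 ≤ Real.log s := Real.log_nonneg hs1
      have h5 : (D : ℝ) * Real.log s ≤ ℓ ^ 2 * ℓ := by gcongr
      have h6 : ℓ ^ 2 * ℓ = ℓ ^ 3 := by ring
      linarith
    calc _ ≤ Real.exp (s / 2) * Real.exp (2 * β * ℓ * s + ((√(s : ℝ))⁻¹) ^ 2 * (ε * s ^ 2) / 2) := by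
          gcongr
      _ = Real.exp (s / 2 + (2 * β * ℓ * s + ε * s / 2)) := by
          rw [← Real.exp_add, inv_pow, Real.sq_sqrt hs0]
          congr 1
          field_simp
      _ ≤ _ := by
          refine Real.exp_le_exp.2 ?_
          have : 1 ≤ ℓ ^ 6 := one_le_pow₀ hℓ1
          have hε1 : ε ≤ 1 := (le_mul_of_one_le_right hε0 this).trans hε
          have : ε * s ≤ 1 * s := mul_le_mul_of_nonneg_right hε1 hs0
          linarith

lemma muVec_nonneg (p k : ℕ) (lam : ℝ) (S : Finset (Fin p)) (j : Fin p) :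
    0 ≤ muVec p k lam S j := by
  unfold muVec; split_ifs <;> positivity

lemma muVec_inner (p k : ℕ) (lam : ℝ) (hlam : 0 < lam) (S S' : Finset (Fin p)) :
    ∑ j, muVec p k lam S j * muVec p k lam S' j = ((S ∩ S').card : ℝ) * (lam / k) := by
  have : ∀ j, muVec p k lam S j * muVec p k lam S' j = if j ∈ S ∩ S' then lam / k else 0 := by
    intro j
    unfold muVec
    have hm : √(lam / k) * √(lam / k) = lam / k := Real.mul_self_sqrt (by positivity)
    by_cases h1 : j ∈ S <;> by_cases h2 : j ∈ S' <;>
      simp only [h1, h2, Finset.mem_inter, and_true, and_false, false_and, if_true, if_false,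
        mul_zero, zero_mul, hm]
  simp only [this]
  rw [Finset.sum_ite_mem]
  simp

theorem norm_bound (β γ lam c2 : ℝ) (p k L n D : ℕ) (hβ : 0 < β) (hlam : 0 < lam)
    (hc2 : 0 < c2) (hℓ1 : 1 ≤ Real.log p) (hk : 1 ≤ k) (hkp : k < p)
    (hL : (L : ℝ) ≤ 2 * β * (k : ℝ) / lam * Real.log ((p : ℝ) - (k : ℝ)))
    (hn : (n : ℝ) ≤ c2 * (k : ℝ) ^ γ / lam ^ 2) (hD : (D : ℝ) ≤ (Real.log p) ^ 2)
    (hε : c2 * (k : ℝ) ^ γ / (k : ℝ) ^ 2 * (Real.log p) ^ 6 ≤ 1)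
    (hq : Real.exp (1 + 2 * β * Real.log p) * (k : ℝ) ^ 2 / p ≤ 1) :
    ∑ a ∈ idx p (L + n) D, (((kset p k).card : ℝ)⁻¹ * ∑ S ∈ kset p k,
        ∏ i : Fin (L + n), mom ((i : ℕ) < L) (muVec p k lam S) (a i)) ^ 2 / factI a
      ≤ Real.exp 2 := by
  set N : ℝ := ((kset p k).card : ℝ) with hN
  have hN0 : 0 < N := by
    have : (kset p k).card = p.choose k := by simp [kset]
    rw [hN, this]; exact_mod_cast Nat.choose_pos hkp.le
  set M : Finset (Fin p) → (Fin (L + n) → Fin p → ℕ) → ℝ := fun S a =>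
    ∏ i : Fin (L + n), mom ((i : ℕ) < L) (muVec p k lam S) (a i) with hM
  set q := Real.exp (1 + 2 * β * Real.log p) with hqd
  have hq1 : 1 ≤ q := Real.one_le_exp (by nlinarith)
  have e : ∑ a ∈ idx p (L + n) D, (N⁻¹ * ∑ S ∈ kset p k, M S a) ^ 2 / factI a
      = N⁻¹ ^ 2 * ∑ S ∈ kset p k, ∑ S' ∈ kset p k, ∑ a ∈ idx p (L + n) D,
        M S a * M S' a / factI a := by
    have : ∀ a, (N⁻¹ * ∑ S ∈ kset p k, M S a) ^ 2 / factI a = N⁻¹ ^ 2 *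
      ∑ S ∈ kset p k, ∑ S' ∈ kset p k, M S a * M S' a / factI a := by
      intro a
      rw [mul_pow, sq (∑ S ∈ kset p k, M S a), Finset.sum_mul_sum]
      rw [mul_div_assoc]
      simp only [Finset.sum_div]
    simp only [this]
    rw [← Finset.mul_sum, Finset.sum_comm]
    congr 1
    refine Finset.sum_congr rfl fun S _ => ?_
    rw [Finset.sum_comm]
  rw [e]
  have hb : ∀ S ∈ kset p k, ∀ S' ∈ kset p k, ∑ a ∈ idx p (L + n) D, M S a * M S' a / factI a
      ≤ Real.exp 1 * q ^ (S ∩ S').card := by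
    intro S hS S' _
    have hSc : S.card = k := (Finset.mem_powersetCard.1 hS).2
    obtain ⟨r, hr, hr1, h⟩ := scalar_bound β γ lam c2 _ p k L n D (S ∩ S').card hβ hlam hc2 rfl
      hℓ1 hk hkp hL hn hD hε (by rw [← hSc]; exact Finset.card_le_card Finset.inter_subset_left)
    refine le_trans ?_ h
    have := kernel_bound (L := L) (n := n) (D := D) (muVec p k lam S) (muVec p k lam S')
      (muVec_nonneg _ _ _ _) (muVec_nonneg _ _ _ _) r hr hr1
    rw [muVec_inner _ _ _ hlam] at this
    exact this
  have hb2 : ∀ S ∈ kset p k, ∑ S' ∈ kset p k, ∑ a ∈ idx p (L + n) D, M S a * M S' a / factI a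
      ≤ Real.exp 1 * (N * Real.exp 1) := by
    intro S hS
    refine (Finset.sum_le_sum (hb S hS)).trans ?_
    rw [← Finset.mul_sum]
    refine mul_le_mul_of_nonneg_left ?_ (Real.exp_pos _).le
    refine (overlap_mgf hkp.le (by omega) q hq1 S hS).trans ?_
    refine mul_le_mul_of_nonneg_left (Real.exp_le_exp.2 hq) hN0.le
  calc _ ≤ N⁻¹ ^ 2 * ∑ S ∈ kset p k, Real.exp 1 * (N * Real.exp 1) := by
        refine mul_le_mul_of_nonneg_left (Finset.sum_le_sum hb2) (by positivity)
    _ = Real.exp 1 * Real.exp 1 := by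
        rw [Finset.sum_const, nsmul_eq_mul, ← hN]
        field_simp
    _ = Real.exp 2 := by rw [← Real.exp_add]; norm_num
    _ ≤ _ := le_rfl

lemma ev_k (α c1 : ℝ) (hα : 0 < α) (hc1 : 0 < c1) :
    ∀ᶠ p : ℕ in atTop, c1 / 2 * (p : ℝ) ^ α ≤ (⌊c1 * (p : ℝ) ^ α⌋₊ : ℝ) ∧
      1 ≤ ⌊c1 * (p : ℝ) ^ α⌋₊ := by
  have h1 : Tendsto (fun p : ℕ => c1 * (p : ℝ) ^ α) atTop atTop :=
    ((tendsto_rpow_atTop hα).comp tendsto_natCast_atTop_atTop).const_mul_atTop hc1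
  filter_upwards [h1.eventually_ge_atTop 2] with p hp
  have h2 := Nat.lt_floor_add_one (c1 * (p : ℝ) ^ α)
  refine ⟨by linarith, Nat.le_floor (by push_cast; linarith)⟩

lemma ev_small (C a : ℝ) (ha : 0 < a) : ∀ᶠ p : ℕ in atTop, C * (p : ℝ) ^ (-a) ≤ 1 := by
  have h1 : Tendsto (fun p : ℕ => C * (p : ℝ) ^ (-a)) atTop (nhds (C * 0)) :=
    ((tendsto_rpow_neg_atTop ha).comp tendsto_natCast_atTop_atTop).const_mul C
  rw [mul_zero] at h1
  exact h1.eventually_le_const one_pos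

lemma ev_log (C a : ℝ) (ha : 0 < a) (hC : 0 < C) :
    ∀ᶠ p : ℕ in atTop, C * (p : ℝ) ^ (-a) * (Real.log p) ^ 6 ≤ 1 := by
  have h := (isLittleO_log_rpow_rpow_atTop (6 : ℝ) ha).bound (inv_pos.2 hC)
  have h' := tendsto_natCast_atTop_atTop (R := ℝ) |>.eventually h
  filter_upwards [h', eventually_ge_atTop 1] with p hp hp1
  have hp1' : (1 : ℝ) ≤ p := by exact_mod_cast hp1
  have hpp : (0 : ℝ) < (p : ℝ) ^ a := by positivity
  have hl : 0 ≤ Real.log p := Real.log_nonneg hp1'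
  rw [Real.norm_of_nonneg (by positivity), Real.norm_of_nonneg hpp.le] at hp
  have e6 : Real.log (p : ℝ) ^ (6 : ℝ) = Real.log p ^ 6 := by
    rw [← Real.rpow_natCast]; norm_num
  rw [e6] at hp
  rw [Real.rpow_neg (by positivity)]
  calc C * ((p : ℝ) ^ a)⁻¹ * Real.log p ^ 6 ≤ C * ((p : ℝ) ^ a)⁻¹ * (C⁻¹ * (p : ℝ) ^ a) := by gcongr
    _ = 1 := by field_simp

/-- Theorem 4: with `k = ⌊c₁ p^α⌋`, `L = ⌊(2βk/λ) log(p-k)⌋`,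
`n = ⌊c₂ k^γ / λ²⌋` and degree bound `D = (log p)²`, if `β < 1/2 - α` and `γ < 2`, the squared
low-degree norm stays bounded as `p → ∞`: there is a constant `C` such that eventually every
polynomial `f` of total degree at most `D` satisfies `(E_P f)² ≤ C · E_Q f²`. -/
theorem stmt4 (α β γ lam c1 c2 : ℝ)
    (hα : 0 < α) (hα2 : α < 1 / 2) (hβ : 0 < β) (hγ : 0 < γ) (hlam : 0 < lam)
    (hc1 : 0 < c1) (hc2 : 0 < c2) (hβ' : β < 1 / 2 - α) (hγ' : γ < 2)
    (k L n : ℕ → ℕ)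
    (hk : ∀ p : ℕ, k p = ⌊c1 * (p : ℝ) ^ α⌋₊)
    (hL : ∀ p : ℕ, L p = ⌊2 * β * (k p : ℝ) / lam * Real.log ((p : ℝ) - (k p : ℝ))⌋₊)
    (hn : ∀ p : ℕ, n p = ⌊c2 * (k p : ℝ) ^ γ / lam ^ 2⌋₊) :
    ∃ C : ℝ, ∀ᶠ p : ℕ in atTop,
      ∀ f : MvPolynomial (Fin p × Fin (L p + n p)) ℝ,
        (f.totalDegree : ℝ) ≤ (Real.log p) ^ 2 →
        (∫ X : Fin (L p + n p) → Fin p → ℝ,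
            MvPolynomial.eval (fun v => X v.2 v.1) f ∂(altLaw p (k p) (L p) (n p) lam)) ^ 2
          ≤ C * ∫ X : Fin (L p + n p) → Fin p → ℝ,
              (MvPolynomial.eval (fun v => X v.2 v.1) f) ^ 2 ∂(nullLaw p (L p + n p)) := by
  refine ⟨Real.exp 2, ?_⟩
  have hlogev : ∀ᶠ p : ℕ in atTop, 1 ≤ Real.log p :=
    (Real.tendsto_log_atTop.comp tendsto_natCast_atTop_atTop).eventually_ge_atTop 1
  filter_upwards [hlogev, ev_k α c1 hα hc1, eventually_ge_atTop 1,
    ev_small (2 * c1) (1 - α) (by linarith),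
    ev_log (c2 * (c1 / 2) ^ (γ - 2)) (α * (2 - γ)) (mul_pos hα (by linarith)) (by positivity),
    ev_small (Real.exp 1 * c1 ^ 2) (1 - 2 * α - 2 * β) (by linarith)]
    with p hlog hkp hp1 hsm hlg hqq
  intro f hf
  rw [← hk p] at hkp
  obtain ⟨hklow, hk1⟩ := hkp
  have hp0 : (0 : ℝ) < p := by exact_mod_cast hp1
  have hk0 : (0 : ℝ) < k p := by exact_mod_cast hk1
  have hkup : (k p : ℝ) ≤ c1 * (p : ℝ) ^ α := by
    rw [hk p]; exact Nat.floor_le (by positivity)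
  have hklt : k p < p := by
    have h1 : 2 * c1 * (p : ℝ) ^ α ≤ p := by
      have e : (p : ℝ) ^ α = (p : ℝ) ^ (-(1 - α)) * p := by
        rw [← Real.rpow_add_one hp0.ne']; congr 1; ring
      rw [e, ← mul_assoc]
      calc _ ≤ 1 * (p : ℝ) := by gcongr
        _ = p := one_mul _
    have : (k p : ℝ) < p := by
      have : 0 < c1 * (p : ℝ) ^ α := by positivity
      linarith
    exact_mod_cast this
  have hlogpk : 0 ≤ Real.log ((p : ℝ) - k p) := by
    refine Real.log_nonneg ?_
    have : (k p : ℝ) + 1 ≤ p := by exact_mod_cast hklt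
    linarith
  have hLb : (L p : ℝ) ≤ 2 * β * (k p : ℝ) / lam * Real.log ((p : ℝ) - (k p : ℝ)) := by
    rw [hL p]; exact Nat.floor_le (by positivity)
  have hnb : (n p : ℝ) ≤ c2 * (k p : ℝ) ^ γ / lam ^ 2 := by
    rw [hn p]; exact Nat.floor_le (by positivity)
  have hε : c2 * (k p : ℝ) ^ γ / (k p : ℝ) ^ 2 * (Real.log p) ^ 6 ≤ 1 := by
    refine le_trans ?_ hlg
    refine mul_le_mul_of_nonneg_right ?_ (by positivity)
    have e1 : (k p : ℝ) ^ γ / (k p : ℝ) ^ 2 = (k p : ℝ) ^ (γ - 2) := by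
      rw [Real.rpow_sub hk0]; norm_num
    rw [mul_div_assoc, e1, mul_assoc]
    refine mul_le_mul_of_nonneg_left ?_ hc2.le
    have e2 : (c1 / 2) ^ (γ - 2) * (p : ℝ) ^ (-(α * (2 - γ))) = (c1 / 2 * (p : ℝ) ^ α) ^ (γ - 2) := by
      rw [Real.mul_rpow (by positivity) (by positivity), ← Real.rpow_mul hp0.le]
      congr 2; ring
    rw [e2]
    exact Real.rpow_le_rpow_of_nonpos (by positivity) hklow (by linarith)
  have hq : Real.exp (1 + 2 * β * Real.log p) * (k p : ℝ) ^ 2 / p ≤ 1 := by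
    refine le_trans ?_ hqq
    have e1 : Real.exp (1 + 2 * β * Real.log p) = Real.exp 1 * (p : ℝ) ^ (2 * β) := by
      rw [Real.exp_add, Real.rpow_def_of_pos hp0]; congr 2; ring
    have e2 : (p : ℝ) ^ (-(1 - 2 * α - 2 * β)) = (p : ℝ) ^ (2 * β) * ((p : ℝ) ^ α) ^ 2 / p := by
      rw [← Real.rpow_natCast, ← Real.rpow_mul hp0.le, ← Real.rpow_add hp0,
        ← Real.rpow_sub_one hp0.ne']
      congr 1; push_cast; ring
    rw [e1, e2]
    calc _ ≤ Real.exp 1 * (p : ℝ) ^ (2 * β) * (c1 * (p : ℝ) ^ α) ^ 2 / p := by gcongr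
      _ = _ := by ring
  refine (lowdeg_bound (D := f.totalDegree) lam f le_rfl).trans ?_
  refine mul_le_mul_of_nonneg_right ?_ (integral_nonneg fun X => sq_nonneg _)
  exact norm_bound β γ lam c2 p (k p) (L p) (n p) f.totalDegree hβ hlam hc2 hlog hk1 hklt hLb hnb
    hf hε hq
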